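/- There exists an absolute constant C₀ > 0 with the following property. Let n ≥ k ≥ 2 be integers, let γ > 0, let τ ≥ e^{−γ}, and let λ ∈ (0,1] satisfy λ ≥ (k² e^{γ/τ})/n. Let s be a λ-dispersed preference model on n items. Then for every v ∈ Δ(n) with Shannon entropy H(v) ≥ log n − γ, there exists v' ∈ EIRD with d_TV(v, v') ≤ C₀ τ. -/

import Mathlib

open Finset

/-- The choice distribution induced by preference model `s` at memory vector `v`
when menu `K` is shown. -/
noncomputable def menuDist {n : ℕ} (s : (Fin n → ℝ) → Fin n → ℝ)
    (v : Fin n → ℝ) (K : Finset (Fin n)) : Fin n → ℝ :=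
  fun i => if i ∈ K then s v i / ∑ j ∈ K, s v j else 0

/-- The set of instantaneously realizable distributions at memory vector `v`. -/
noncomputable def IRD {n : ℕ} (k : ℕ) (s : (Fin n → ℝ) → Fin n → ℝ)
    (v : Fin n → ℝ) : Set (Fin n → ℝ) :=
  convexHull ℝ { p | ∃ K : Finset (Fin n), K.card = k ∧ p = menuDist s v K }

/-- The everywhere instantaneously realizable distributions: the intersection of
`IRD(v)` over all memory vectors `v` in the simplex. -/
noncomputable def EIRD {n : ℕ} (k : ℕ) (s : (Fin n → ℝ) → Fin n → ℝ) :
    Set (Fin n → ℝ) :=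
  ⋂ v ∈ stdSimplex ℝ (Fin n), IRD k s v

/-- The `k` largest values of a function on a finite type are separated from the others
by a threshold. -/
lemma exists_card_eq_threshold {ι : Type*} [Fintype ι] [DecidableEq ι] (d : ι → ℝ) {k : ℕ}
    (hk : 1 ≤ k) (hkn : k ≤ Fintype.card ι) :
    ∃ (K : Finset ι) (θ : ℝ), K.card = k ∧ (∀ i ∈ K, θ ≤ d i) ∧ ∀ i ∉ K, d i ≤ θ := by
  have top : ∀ m ≤ Fintype.card ι,
      ∃ K : Finset ι, K.card = m ∧ ∀ i ∈ K, ∀ j ∉ K, d j ≤ d i := by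
    intro m
    induction m with
    | zero => exact fun _ => ⟨∅, by simp⟩
    | succ m ih =>
      intro hm
      obtain ⟨K, hK, hd⟩ := ih (by omega)
      have hne : Kᶜ.Nonempty := by
        rw [← Finset.card_pos, Finset.card_compl]
        omega
      obtain ⟨a, ha, hmax⟩ := Finset.exists_max_image Kᶜ d hne
      rw [Finset.mem_compl] at ha
      refine ⟨insert a K, by rw [Finset.card_insert_of_notMem ha, hK], ?_⟩
      intro i hi j hj
      rw [Finset.mem_insert, not_or] at hj
      rcases Finset.mem_insert.1 hi with rfl | hi
      · exact hmax j (Finset.mem_compl.2 hj.2)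
      · exact hd i hi j hj.2
  obtain ⟨K, hK, hd⟩ := top k hkn
  obtain ⟨a, ha, hmin⟩ := Finset.exists_min_image K d (Finset.card_pos.1 (by omega))
  exact ⟨K, d a, hK, hmin, hd a ha⟩

/-- If no weight `y i` exceeds a `1 / k` fraction of the total weight, then some `k`-element set
has average `d`-value at least the `y`-weighted average of `d`. -/
lemma exists_card_eq_weighted_sum_le {ι : Type*} [Fintype ι] [DecidableEq ι] (d y : ι → ℝ)
    {k : ℕ} (hk : 1 ≤ k) (hkn : k ≤ Fintype.card ι) (hy : ∀ i, 0 ≤ y i)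
    (hyk : ∀ i, k * y i ≤ ∑ j, y j) :
    ∃ K : Finset ι, K.card = k ∧ k * ∑ i, d i * y i ≤ (∑ j, y j) * ∑ i ∈ K, d i := by
  obtain ⟨K, θ, hK, hge, hle⟩ := exists_card_eq_threshold d hk hkn
  refine ⟨K, hK, ?_⟩
  set Y := ∑ j, y j with hY
  have key : ∑ i, (d i - θ) * (k * y i) ≤ ∑ i ∈ K, (d i - θ) * Y := by
    rw [← Finset.sum_add_sum_compl K]
    have h₁ : ∑ i ∈ K, (d i - θ) * (k * y i) ≤ ∑ i ∈ K, (d i - θ) * Y :=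
      Finset.sum_le_sum fun i hi =>
        mul_le_mul_of_nonneg_left (hyk i) (sub_nonneg.2 (hge i hi))
    have h₂ : ∑ i ∈ Kᶜ, (d i - θ) * (k * y i) ≤ 0 :=
      Finset.sum_nonpos fun i hi =>
        mul_nonpos_of_nonpos_of_nonneg (sub_nonpos.2 (hle i (Finset.mem_compl.1 hi)))
          (mul_nonneg (Nat.cast_nonneg k) (hy i))
    linarith
  have hl : ∑ i, (d i - θ) * (k * y i) = k * ∑ i, d i * y i - θ * k * Y := by
    rw [hY, Finset.mul_sum, Finset.mul_sum, ← Finset.sum_sub_distrib]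
    exact Finset.sum_congr rfl fun i _ => by ring
  have hr : ∑ i ∈ K, (d i - θ) * Y = Y * ∑ i ∈ K, d i - θ * k * Y := by
    rw [← Finset.sum_mul, Finset.sum_sub_distrib, Finset.sum_const, hK, nsmul_eq_mul]
    ring
  linarith

/-- A distribution all of whose score-normalised entries are at most a `1 / k` fraction of their
sum is instantaneously realizable. -/
lemma mem_IRD_of_score_bound {n k : ℕ} (hk : 1 ≤ k) (hkn : k ≤ n)
    (s : (Fin n → ℝ) → Fin n → ℝ) (v x : Fin n → ℝ) (hs : ∀ i, 0 < s v i)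
    (hx : x ∈ stdSimplex ℝ (Fin n)) (hb : ∀ i, k * (x i / s v i) ≤ ∑ j, x j / s v j) :
    x ∈ IRD k s v := by
  by_contra hmem
  have hfin : {p | ∃ K : Finset (Fin n), K.card = k ∧ p = menuDist s v K}.Finite :=
    (Set.finite_range (menuDist s v)).subset fun p ⟨K, _, hp⟩ => ⟨K, hp.symm⟩
  obtain ⟨f, u, hf, hfx⟩ := geometric_hahn_banach_closed_point (convex_convexHull ℝ _)
    (hfin.isClosed_convexHull ℝ) hmem
  have hrep : ∀ z : Fin n → ℝ, f z = ∑ i, z i * f (Pi.single i 1) := fun z => by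
    conv_lhs => rw [pi_eq_sum_univ' z]
    simp
  obtain ⟨K, hK, hle⟩ := exists_card_eq_weighted_sum_le
    (fun i => (f (Pi.single i 1) - f x) * s v i) (fun i => x i / s v i) hk (by simpa using hkn)
    (fun i => div_nonneg (hx.1 i) (hs i).le) hb
  have hzero : ∑ i, (f (Pi.single i 1) - f x) * s v i * (x i / s v i) = 0 := by
    calc ∑ i, (f (Pi.single i 1) - f x) * s v i * (x i / s v i)
        = ∑ i, (x i * f (Pi.single i 1) - x i * f x) :=
          Finset.sum_congr rfl fun i _ => by field_simp [(hs i).ne']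
      _ = 0 := by rw [Finset.sum_sub_distrib, ← hrep, ← Finset.sum_mul, hx.2]; ring
  have hYpos : 0 < ∑ j, x j / s v j := by
    refine lt_of_le_of_ne (Finset.sum_nonneg fun i _ => div_nonneg (hx.1 i) (hs i).le) ?_
    intro h
    have hx0 := (Finset.sum_eq_zero_iff_of_nonneg
      (fun i _ => div_nonneg (hx.1 i) (hs i).le)).1 h.symm
    have : ∑ i, x i = 0 := Finset.sum_eq_zero fun i hi =>
      (div_eq_zero_iff.1 (hx0 i hi)).resolve_right (hs i).ne'
    linarith [hx.2]
  have hSpos : 0 < ∑ j ∈ K, s v j :=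
    Finset.sum_pos (fun i _ => hs i) (Finset.card_pos.1 (by omega))
  have hmenu : f (menuDist s v K) = (∑ i ∈ K, s v i * f (Pi.single i 1)) / ∑ j ∈ K, s v j := by
    rw [hrep, Finset.sum_div, ← Finset.sum_subset (Finset.subset_univ K)]
    · exact Finset.sum_congr rfl fun i hi => by simp [menuDist, hi]; ring
    · intro i _ hi
      simp [menuDist, hi]
  have hlt := (hf _ (subset_convexHull ℝ _ ⟨K, hK, rfl⟩)).trans hfx
  rw [hmenu, div_lt_iff₀ hSpos] at hlt
  have hneg : ∑ i ∈ K, (f (Pi.single i 1) - f x) * s v i < 0 := by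
    have : ∑ i ∈ K, (f (Pi.single i 1) - f x) * s v i
        = ∑ i ∈ K, s v i * f (Pi.single i 1) - f x * ∑ j ∈ K, s v j := by
      rw [Finset.mul_sum, ← Finset.sum_sub_distrib]
      exact Finset.sum_congr rfl fun i _ => by ring
    linarith
  rw [hzero, mul_zero] at hle
  exact absurd hle (not_le.2 (mul_neg_of_pos_of_neg hYpos hneg))

/-- For a `lam`-dispersed model, every distribution with entries at most `lam / k` is everywhere
instantaneously realizable. -/
lemma mem_EIRD_of_le {n k : ℕ} (hk : 1 ≤ k) (hkn : k ≤ n) {lam : ℝ} (hlam : 0 < lam)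
    (s : (Fin n → ℝ) → Fin n → ℝ)
    (hs : ∀ v ∈ stdSimplex ℝ (Fin n), ∀ i, lam ≤ s v i ∧ s v i ≤ 1)
    {x : Fin n → ℝ} (hx : x ∈ stdSimplex ℝ (Fin n)) (hb : ∀ i, k * x i ≤ lam) :
    x ∈ EIRD k s := by
  refine Set.mem_iInter₂.2 fun v hv => ?_
  have hpos : ∀ i, 0 < s v i := fun i => hlam.trans_le (hs v hv i).1
  refine mem_IRD_of_score_bound hk hkn s v x hpos hx fun i => ?_
  calc k * (x i / s v i) = k * x i / s v i := by ring
    _ ≤ 1 := (div_le_one (hpos i)).2 ((hb i).trans (hs v hv i).1)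
    _ = ∑ j, x j := hx.2.symm
    _ ≤ ∑ j, x j / s v j := Finset.sum_le_sum fun j _ =>
        le_div_self (hx.1 j) (hpos j) (hs v hv j).2

/-- The mass that a distribution of entropy at least `log n - γ` places on entries exceeding
`exp L / n`. -/
lemma heavy_mass_mul_le_of_entropy {n : ℕ} (hn : 0 < n) {γ L : ℝ} {v : Fin n → ℝ}
    (hv : v ∈ stdSimplex ℝ (Fin n))
    (hH : Real.log n - γ ≤ -∑ i, v i * Real.log (v i)) :
    (∑ i with Real.exp L < n * v i, v i) * (L - 1) ≤ γ := by
  have hn' : (0 : ℝ) < n := Nat.cast_pos.2 hn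
  set A : Finset (Fin n) := {i | Real.exp L < n * v i} with hA
  have hKL : ∑ i, v i * Real.log (n * v i) ≤ γ := by
    have : ∀ i, v i * Real.log (n * v i) = v i * Real.log n + v i * Real.log (v i) := by
      intro i
      rcases (hv.1 i).eq_or_lt with h | h
      · simp [← h]
      · rw [Real.log_mul hn'.ne' h.ne']
        ring
    rw [Finset.sum_congr rfl fun i _ => this i, Finset.sum_add_distrib, ← Finset.sum_mul, hv.2]
    linarith
  have hheavy : ∑ i ∈ A, v i * L ≤ ∑ i ∈ A, v i * Real.log (n * v i) := by
    refine Finset.sum_le_sum fun i hi => mul_le_mul_of_nonneg_left ?_ (hv.1 i)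
    have hi' := (Finset.mem_filter.1 hi).2
    exact (Real.le_log_iff_exp_le ((Real.exp_pos L).trans hi')).2 hi'.le
  have hlight : ∑ i ∈ Aᶜ, (v i - 1 / n) ≤ ∑ i ∈ Aᶜ, v i * Real.log (n * v i) := by
    refine Finset.sum_le_sum fun i _ => ?_
    rcases (hv.1 i).eq_or_lt with h | h
    · simp [← h]
    · have hlog := Real.one_sub_inv_le_log_of_pos (mul_pos hn' h)
      calc v i - 1 / n = v i * (1 - (n * v i)⁻¹) := by field_simp
        _ ≤ _ := mul_le_mul_of_nonneg_left hlog h.le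
  have hcard : ∑ _i ∈ Aᶜ, (1 / n : ℝ) ≤ 1 := by
    calc ∑ _i ∈ Aᶜ, (1 / n : ℝ) ≤ ∑ _i : Fin n, (1 / n : ℝ) :=
          Finset.sum_le_sum_of_subset_of_nonneg (Finset.subset_univ _)
            fun _ _ _ => by positivity
      _ = 1 := by simp [hn'.ne']
  rw [Finset.sum_sub_distrib] at hlight
  rw [← Finset.sum_mul] at hheavy
  have hsplit := Finset.sum_add_sum_compl A v
  have hsplit' := Finset.sum_add_sum_compl A fun i => v i * Real.log (n * v i)
  rw [hv.2] at hsplit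
  linarith

/-- High-entropy containment in `EIRD`: there is an absolute constant `C₀ > 0` such that
for every `λ`-dispersed preference model with `λ ≥ k² e^{γ/τ} / n` (where `τ ≥ e^{−γ}`),
every distribution `v` with Shannon entropy at least `log n − γ` is within total variation
distance `C₀ τ` of some point of `EIRD`. -/
theorem highEntropy_close_to_EIRD :
    ∃ C₀ : ℝ, 0 < C₀ ∧
      ∀ (n k : ℕ), 2 ≤ k → k ≤ n →
      ∀ γ τ lam : ℝ, 0 < γ → Real.exp (-γ) ≤ τ →
        0 < lam → lam ≤ 1 → (k : ℝ) ^ 2 * Real.exp (γ / τ) / n ≤ lam →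
      ∀ s : (Fin n → ℝ) → Fin n → ℝ,
        (∀ v ∈ stdSimplex ℝ (Fin n), ∀ i, lam ≤ s v i ∧ s v i ≤ 1) →
      ∀ v ∈ stdSimplex ℝ (Fin n),
        Real.log n - γ ≤ -∑ i, v i * Real.log (v i) →
        ∃ v' ∈ EIRD k s, (1 / 2) * ∑ i, |v i - v' i| ≤ C₀ * τ := by
  refine ⟨3, by norm_num, ?_⟩
  intro n k hk hkn γ τ lam hγ hτ hlam hlam1 hbound s hs v hv hH
  have hn : 0 < n := by omega
  have hn' : (0 : ℝ) < n := Nat.cast_pos.2 hn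
  have hk' : (2 : ℝ) ≤ k := by exact_mod_cast hk
  have hτ0 : 0 < τ := (Real.exp_pos _).trans_le hτ
  have hmass := heavy_mass_mul_le_of_entropy (L := γ / τ) hn hv hH
  set m := ∑ i with Real.exp (γ / τ) < n * v i, v i with hm
  have hm0 : 0 ≤ m := Finset.sum_nonneg fun i _ => hv.1 i
  have hm1 : m ≤ 1 := hv.2 ▸
    Finset.sum_le_sum_of_subset_of_nonneg (Finset.subset_univ _) fun i _ _ => hv.1 i
  have hmτ : m ≤ 3 * τ := by
    rcases le_or_gt (1 / 3) τ with h | h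
    · linarith
    · have hγ' : 2 / 3 < γ := by linarith [Real.add_one_le_exp (-γ)]
      have hmul : m * (γ - τ) ≤ γ * τ := by
        have := mul_le_mul_of_nonneg_right hmass hτ0.le
        calc m * (γ - τ) = m * (γ / τ - 1) * τ := by field_simp
          _ ≤ γ * τ := this
      have hhalf : m * (γ / 2) ≤ m * (γ - τ) :=
        mul_le_mul_of_nonneg_left (by linarith) hm0
      have : m ≤ 2 * τ := le_of_mul_le_mul_right (by linarith) hγ
      linarith
  have hE : 1 ≤ Real.exp (γ / τ) := Real.one_le_exp (by positivity)
  let x : Fin n → ℝ := fun i => (if Real.exp (γ / τ) < n * v i then 0 else v i) + m / n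
  have hsum : ∑ i, (if Real.exp (γ / τ) < n * v i then 0 else v i) = 1 - m := by
    have : ∀ i, (if Real.exp (γ / τ) < n * v i then 0 else v i)
        = v i - if Real.exp (γ / τ) < n * v i then v i else 0 := fun i => by
      split_ifs <;> ring
    rw [Finset.sum_congr rfl fun i _ => this i, Finset.sum_sub_distrib, hv.2,
      ← Finset.sum_filter]
  have hconst : ∑ _i : Fin n, m / n = m := by
    simp
    field_simp
  have hx : x ∈ stdSimplex ℝ (Fin n) := by
    refine ⟨fun i => add_nonneg ?_ (by positivity), ?_⟩
    · split_ifs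
      exacts [le_rfl, hv.1 i]
    · rw [Finset.sum_add_distrib, hsum, hconst]
      ring
  refine ⟨x, mem_EIRD_of_le (by omega) hkn hlam s hs hx fun i => ?_, ?_⟩
  · have hxi : n * x i ≤ k * Real.exp (γ / τ) := by
      have h₁ : n * (if Real.exp (γ / τ) < n * v i then 0 else v i) ≤ Real.exp (γ / τ) := by
        split_ifs with h
        · simpa using (Real.exp_pos _).le
        · exact not_lt.1 h
      have h₂ : n * x i = n * (if Real.exp (γ / τ) < n * v i then 0 else v i) + m := by
        simp only [x]
        field_simp
      nlinarith
    refine le_trans ?_ hbound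
    rw [le_div_iff₀ hn']
    nlinarith
  · have habs : ∀ i, |v i - x i| ≤ (if Real.exp (γ / τ) < n * v i then v i else 0) + m / n := by
      intro i
      have hmn : 0 ≤ m / n := by positivity
      simp only [x]
      split_ifs
      · rw [abs_le]
        constructor <;> linarith [hv.1 i]
      · rw [abs_le]
        constructor <;> linarith
    have := Finset.sum_le_sum fun i (_ : i ∈ Finset.univ) => habs i
    rw [Finset.sum_add_distrib, hconst, ← Finset.sum_filter] at this
    linarith
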